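/- Convex hull computation from the running example: in ℝ³ with coordinates (c, k, p), let S₁ = {(c, k, p) | c = k + 1} (the current negative condition c - k = 1) and S₂ = {(c, k, p) | p + k ≤ 0 ∧ p = 2 ∧ c = 0} (the generalized counterexample condition 0 ≥ p + k ∧ 0 = p - 2 ∧ 0 = c). Then the convex hull (over ℝ) of S₁ ∪ S₂ equals {(c, k, p) | k + 1 ≤ c}. -/

import Mathlib

/-!
Put `f (c, k, p) = c - k`. The first set is the hyperplane `f = 1`, and on the second set, which
lies in the half-space `1 ≤ f`, the functional `f` is unbounded above. Hence every `y` with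
`1 ≤ f y` satisfies `f y < f s` for some `s` of the second set, and the ray from `s` through `y`
meets the hyperplane at or beyond `y`.
-/

section HalfSpace

variable {𝕜 E : Type*} [Field 𝕜] [LinearOrder 𝕜] [IsStrictOrderedRing 𝕜]
  [AddCommGroup E] [Module 𝕜 E] {f : E →ₗ[𝕜] 𝕜} {r : 𝕜}

theorem exists_apply_eq_and_mem_segment {s y : E} (hry : r ≤ f y) (hys : f y < f s) :
    ∃ x, f x = r ∧ y ∈ segment 𝕜 s x := by
  have hpos : 0 < f s - f y := sub_pos.2 hys
  let t := (f s - r) / (f s - f y)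
  have one_le_t : 1 ≤ t := (one_le_div hpos).2 (sub_le_sub_left hry _)
  refine ⟨t • (y - s) + s, ?_, ?_⟩
  · calc f (t • (y - s) + s) = f s - t * (f s - f y) := by
          simp only [map_add, map_smul, map_sub, smul_eq_mul]; ring
      _ = f s - (f s - r) := by rw [div_mul_cancel₀ _ hpos.ne']
      _ = r := sub_sub_cancel _ _
  · simpa [mem_segment_iff_wbtw] using
      wbtw_smul_vadd_smul_vadd_of_nonneg_of_le s (y - s) zero_le_one one_le_t

theorem convexHull_hyperplane_union_of_not_bddAbove {T : Set E} (hT : T ⊆ {x | r ≤ f x})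
    (hunbdd : ¬BddAbove (f '' T)) :
    convexHull 𝕜 ({x | f x = r} ∪ T) = {x | r ≤ f x} := by
  apply Set.Subset.antisymm
  · exact convexHull_min (Set.union_subset (fun _ hx ↦ hx.ge) hT)
      (convex_halfSpace_ge f.isLinear r)
  · intro y hy
    obtain ⟨_, ⟨s, hs, rfl⟩, hys⟩ := not_bddAbove_iff.1 hunbdd (f y)
    obtain ⟨x, hx, hyx⟩ := exists_apply_eq_and_mem_segment hy hys
    exact segment_subset_convexHull (Set.mem_union_right _ hs) (Set.mem_union_left _ hx) hyx

end HalfSpace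

theorem convexHull_running_example_general {𝕜 : Type*} [Field 𝕜] [LinearOrder 𝕜]
    [IsStrictOrderedRing 𝕜] :
    convexHull 𝕜
      ({q : 𝕜 × 𝕜 × 𝕜 | q.1 = q.2.1 + 1} ∪
       {q : 𝕜 × 𝕜 × 𝕜 | q.2.2 + q.2.1 ≤ 0 ∧ q.2.2 = 2 ∧ q.1 = 0}) =
      {q : 𝕜 × 𝕜 × 𝕜 | q.2.1 + 1 ≤ q.1} := by
  let f : 𝕜 × 𝕜 × 𝕜 →ₗ[𝕜] 𝕜 :=
    LinearMap.fst 𝕜 𝕜 (𝕜 × 𝕜) - LinearMap.fst 𝕜 𝕜 𝕜 ∘ₗ LinearMap.snd 𝕜 𝕜 (𝕜 × 𝕜)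
  let T : Set (𝕜 × 𝕜 × 𝕜) := {q | q.2.2 + q.2.1 ≤ 0 ∧ q.2.2 = 2 ∧ q.1 = 0}
  have f_apply (q : 𝕜 × 𝕜 × 𝕜) : f q = q.1 - q.2.1 := rfl
  have hT : T ⊆ {q | 1 ≤ f q} := by
    rintro q ⟨hpk, hp, hc⟩
    rw [Set.mem_ofPred_eq, f_apply]
    linarith
  have hunbdd : ¬BddAbove (f '' T) := by
    refine not_bddAbove_iff.2 fun M ↦ ⟨_, ⟨(0, -2 - |M|, 2), ⟨?_, rfl, rfl⟩, rfl⟩, ?_⟩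
    · linarith [abs_nonneg M]
    · rw [f_apply]
      linarith [le_abs_self M]
  simpa only [f_apply, sub_eq_iff_eq_add', le_sub_iff_add_le'] using
    convexHull_hyperplane_union_of_not_bddAbove hT hunbdd

theorem convexHull_running_example :
    convexHull ℝ
      ({q : ℝ × ℝ × ℝ | q.1 = q.2.1 + 1} ∪
       {q : ℝ × ℝ × ℝ | q.2.2 + q.2.1 ≤ 0 ∧ q.2.2 = 2 ∧ q.1 = 0}) =
      {q : ℝ × ℝ × ℝ | q.2.1 + 1 ≤ q.1} :=
  convexHull_running_example_general
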